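/- Fix m ≥ 1 and j with 2 ≤ j ≤ m, and consider the complete bipartite permutation τ_{m,2} ∈ S_{m+2}. The 1-subgraph S₁ of its inversion graph consisting of exactly the two (non-crossing) edges (1, m+1) and (j, m+2) is valid if and only if m + j is even. -/

import Mathlib

/- Common definitions: the classical and MVP parking processes, parking
functions, inversion graphs and 1-subgraphs, Motzkin paths, and sandpile
configurations on complete graphs. Spots, cars and vertices are 0-indexed
(element `i : Fin n` corresponds to the 1-indexed `i+1` of the paper). -/

namespace MVPPaper

open Finset

variable {n : ℕ}

/-- The first unoccupied spot `k ≥ s` in the occupancy `occ`, if any exists.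
`occ k = some i` means spot `k` is occupied by car `i`. -/
def firstFree (occ : Fin n → Option (Fin n)) (s : Fin n) : Option (Fin n) :=
  (List.finRange n).find? fun k => decide (s ≤ k) && (occ k).isNone

/-- One step of the classical parking process: car `i`, preferring spot `s`,
parks in the first free spot `k ≥ s` (failure if none exists). -/
def classicalStep (occ : Fin n → Option (Fin n)) (i s : Fin n) :
    Option (Fin n → Option (Fin n)) :=
  (firstFree occ s).map fun k => Function.update occ k (some i)

/-- One step of the MVP parking process: car `i` parks in its preferred spot
`s`; if `s` was occupied by an earlier car `j`, then `j` is bumped out and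
drives on to the first free spot `k ≥ s` (failure if none exists). -/
def mvpStep (occ : Fin n → Option (Fin n)) (i s : Fin n) :
    Option (Fin n → Option (Fin n)) :=
  match occ s with
  | none => some (Function.update occ s (some i))
  | some j =>
      (firstFree (Function.update occ s (some i)) s).map fun k =>
        Function.update (Function.update occ s (some i)) k (some j)

/-- Run a parking process: cars `0, 1, …, n-1` enter in order, with car `i`
preferring spot `p i`. Returns the final occupancy, or `none` on failure. -/
def runProcess
    (step : (Fin n → Option (Fin n)) → Fin n → Fin n → Option (Fin n → Option (Fin n)))
    (p : Fin n → Fin n) : Option (Fin n → Option (Fin n)) :=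
  List.foldlM (fun occ i => step occ i (p i)) (fun _ => none) (List.finRange n)

def mvpRun (p : Fin n → Fin n) : Option (Fin n → Option (Fin n)) :=
  runProcess mvpStep p

def classicalRun (p : Fin n → Fin n) : Option (Fin n → Option (Fin n)) :=
  runProcess classicalStep p

/-- All cars park successfully under the MVP process. -/
def IsMVPParking (p : Fin n → Fin n) : Prop := (mvpRun p).isSome

/-- All cars park successfully under the classical process. -/
def IsClassicalParking (p : Fin n → Fin n) : Prop := (classicalRun p).isSome

/-- `MVPOutcome p π` means that the MVP parking process for `p` succeeds, and
car `π i` finally occupies spot `i` for all `i`; that is, `O_MVP(p) = π`. -/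
def MVPOutcome (p : Fin n → Fin n) (π : Equiv.Perm (Fin n)) : Prop :=
  ∃ occ, mvpRun p = some occ ∧ ∀ i, occ i = some (π i)

/-- `p` is a parking function: for every `k`, at least `k+1` cars prefer a spot
`≤ k` (the classical counting characterisation, 0-indexed). -/
def IsParkingFunction (p : Fin n → Fin n) : Prop :=
  ∀ k : Fin n, (k : ℕ) + 1 ≤ (univ.filter fun i => p i ≤ k).card

/-- The fibre of the MVP outcome map over `π`: parking functions with MVP
outcome `π`. -/
def FibMVP (π : Equiv.Perm (Fin n)) : Set (Fin n → Fin n) :=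
  {p | IsParkingFunction p ∧ MVPOutcome p π}

/-- The set of inversions of `π` (where `π i` is the car occupying spot `i`):
pairs `(j, i)` with `j < i` and `π j > π i`. These are the edges of the
inversion graph `G_π`. -/
def invFinset (π : Equiv.Perm (Fin n)) : Finset (Fin n × Fin n) :=
  univ.filter fun e => e.1 < e.2 ∧ π e.2 < π e.1

/-- The left-inversions of `π` at `i`. -/
def lInv (π : Equiv.Perm (Fin n)) (i : Fin n) : Finset (Fin n) :=
  univ.filter fun j => j < i ∧ π i < π j

/-- A 1-subgraph of the inversion graph of `π`: a set of inversions with at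
most one incident left-arc at each vertex. -/
def IsOneSubgraph (π : Equiv.Perm (Fin n)) (S : Finset (Fin n × Fin n)) : Prop :=
  S ⊆ invFinset π ∧ ∀ i j j' : Fin n, (j, i) ∈ S → (j', i) ∈ S → j = j'

/-- The map `Ψ_{Sub→PF}`: the parking preference `p` where `p (π i) = j` if
`(j, i) ∈ S` (for the unique such `j`), and `p (π i) = i` otherwise. -/
noncomputable def subToPF (π : Equiv.Perm (Fin n)) (S : Finset (Fin n × Fin n)) :
    Fin n → Fin n := fun c =>
  if h : ∃ j, (j, π.symm c) ∈ S then h.choose else π.symm c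

/-- The map `Ψ_{PF→Sub}`: the set of inversions `(j, i)` of `π` with
`p (π i) = j`. -/
def pfToSub (π : Equiv.Perm (Fin n)) (p : Fin n → Fin n) : Finset (Fin n × Fin n) :=
  (invFinset π).filter fun e => p (π e.2) = e.1

/-- A 1-subgraph `S` is valid if the MVP outcome of `Ψ_{Sub→PF}(S)` is `π`. -/
def IsValid (π : Equiv.Perm (Fin n)) (S : Finset (Fin n × Fin n)) : Prop :=
  MVPOutcome (subToPF π S) π

/-- `π` contains the pattern `321`. -/
def Contains321 (π : Equiv.Perm (Fin n)) : Prop :=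
  ∃ i j k : Fin n, i < j ∧ j < k ∧ π k < π j ∧ π j < π i

/-- `π` contains the pattern `3412`. -/
def Contains3412 (π : Equiv.Perm (Fin n)) : Prop :=
  ∃ i j k l : Fin n, i < j ∧ j < k ∧ k < l ∧ π k < π l ∧ π l < π i ∧ π i < π j

/-- `S` is `P⃗₂`-free: there is no triple `i < j < k` with `(i,j) ∈ S` and
`(j,k) ∈ S`. -/
def P2Free (S : Finset (Fin n × Fin n)) : Prop :=
  ¬∃ i j k : Fin n, i < j ∧ j < k ∧ (i, j) ∈ S ∧ (j, k) ∈ S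

/-- `S` is horizontally separated (HS): any two distinct edges `(j,i)` and
`(j',i')` of `S` satisfy `i < j'` or `i' < j`. -/
def IsHS (S : Finset (Fin n × Fin n)) : Prop :=
  ∀ e ∈ S, ∀ e' ∈ S, e ≠ e' → e.2 < e'.1 ∨ e'.2 < e.1

/-- Steps of a Motzkin path: up, horizontal, down. -/
inductive MStep : Type
  | U : MStep
  | H : MStep
  | D : MStep
  deriving DecidableEq

/-- The height change of a step. -/
def stepVal : MStep → ℤ
  | MStep.U => 1
  | MStep.H => 0
  | MStep.D => -1

/-- The number of cars preferring spot `j` in `p`. -/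
def prefCount (p : Fin n → Fin n) (j : Fin n) : ℕ :=
  (univ.filter fun i => p i = j).card

/-- The lattice path `Φ(p)`: step `j` is `U`, `H` or `D` according to whether
spot `j` is preferred by at least two, exactly one, or no cars. -/
def Phi (p : Fin n → Fin n) : Fin n → MStep := fun j =>
  if 2 ≤ prefCount p j then MStep.U
  else if prefCount p j = 1 then MStep.H
  else MStep.D

/-- An `n`-step lattice path is a Motzkin path: it ends at height `0` and no
prefix goes below height `0`. -/
def IsMotzkinPath (φ : Fin n → MStep) : Prop :=
  (∑ j : Fin n, stepVal (φ j)) = 0 ∧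
  ∀ k : Fin n, 0 ≤ ∑ j ∈ univ.filter (fun j : Fin n => j ≤ k), stepVal (φ j)

/-- The decreasing permutation `dec_n = n(n-1)⋯1`: spot `i` gets car `n-1-i`
(0-indexed). -/
def decPerm (n : ℕ) : Equiv.Perm (Fin n) :=
  ⟨Fin.rev, Fin.rev, Fin.rev_rev, Fin.rev_rev⟩

/-- A non-crossing matching arc diagram on `{0, …, n-1}`: arcs go left to
right, each vertex is incident to at most one arc, and no two arcs cross. -/
def IsNonCrossMatching (S : Finset (Fin n × Fin n)) : Prop :=
  (∀ e ∈ S, e.1 < e.2) ∧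
  (∀ e ∈ S, ∀ e' ∈ S, e ≠ e' →
    e.1 ≠ e'.1 ∧ e.1 ≠ e'.2 ∧ e.2 ≠ e'.1 ∧ e.2 ≠ e'.2) ∧
  ¬∃ i j k l : Fin n, i < j ∧ j < k ∧ k < l ∧ (i, k) ∈ S ∧ (j, l) ∈ S

/-- A stable configuration `c` (grain counts, each `< n`) on the complete graph
`K_n` is recurrent; by Dhar's burning criterion this amounts on `K_n` to the
existence of an ordering `v` of the vertices with `c (v k) ≥ n - (k+1)` for
every `k` (0-indexed). -/
def IsRecurrentK (c : Fin n → ℕ) : Prop :=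
  (∀ i, c i < n) ∧ ∃ v : Equiv.Perm (Fin n), ∀ k : Fin n, n ≤ c (v k) + (k : ℕ) + 1

/-!
In 0-indexed terms car `0` prefers spot `0`, car `1` prefers spot `b + 1` with `b = j - 2`, and each
later car `t + 2` prefers spot `t`, where it stays. So only cars `0` and `1` ever move, and each
later car bumps the left one of the two. Car `1` first stays put while car `0` is advanced
one spot at a time up to spot `b`, next to car `1`. From then on the two cars occupy adjacent spots
`t` and `t + 1`, and every bump makes the left one leapfrog the other into spot `t + 2`. Hence the
final order of the two cars is decided by the parity of the number `m - b` of leaps.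
-/

/-- The occupancy reached by a parking process once the cars `0, …, k - 1` have entered
(`none` on failure). -/
def runPrefix
    (step : (Fin n → Option (Fin n)) → Fin n → Fin n → Option (Fin n → Option (Fin n)))
    (p : Fin n → Fin n) (k : ℕ) : Option (Fin n → Option (Fin n)) :=
  ((List.finRange n).take k).foldlM (fun occ i => step occ i (p i)) (fun _ => none)

/-- The occupancy in which the spots `k < t` hold the cars `π k`, the spots `t` and `y` hold the
cars `c` and `d`, and all other spots are empty. It describes the parking lot just before the car
`π t` bumps `c`. Spots `t` and `y` outside the lot are ignored. -/
def transientOcc (π : Fin n → Fin n) (t : ℕ) (c d : Fin n) (y : ℕ) : Fin n → Option (Fin n) :=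
  fun k => if (k : ℕ) < t then some (π k) else if (k : ℕ) = t then some c
    else if (k : ℕ) = y then some d else none

section RunPrefix

variable {step : (Fin n → Option (Fin n)) → Fin n → Fin n → Option (Fin n → Option (Fin n))}
  {p : Fin n → Fin n}

theorem runPrefix_zero : runPrefix step p 0 = some fun _ => none := rfl

theorem runPrefix_succ (i : Fin n) :
    runPrefix step p (i + 1) = (runPrefix step p i).bind fun occ => step occ i (p i) := by
  have hi : (i : ℕ) < (List.finRange n).length := by simp
  simp [runPrefix, List.take_succ_eq_append_getElem hi, List.foldlM_append]

theorem runPrefix_self : runPrefix step p n = runProcess step p := by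
  simp [runPrefix, runProcess, List.take_of_length_le]

end RunPrefix

section MVPStep

variable {occ : Fin n → Option (Fin n)} {i s k c : Fin n}

theorem firstFree_eq_some_iff :
    firstFree occ s = some k ↔ s ≤ k ∧ occ k = none ∧ ∀ l, s ≤ l → l < k → occ l ≠ none := by
  rw [firstFree, ← Fin.find?_eq_find?_finRange, Fin.find?_eq_some_iff]
  simp only [← Bool.not_eq_true, Bool.and_eq_true, decide_eq_true_eq, Option.isNone_iff_eq_none]
  grind

theorem mvpStep_of_eq_none (hs : occ s = none) :
    mvpStep occ i s = some (Function.update occ s (some i)) := by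
  simp [mvpStep, hs]

theorem mvpStep_of_eq_some (hs : occ s = some c) (hsk : s < k) (hk : occ k = none)
    (hl : ∀ l, s < l → l < k → occ l ≠ none) :
    mvpStep occ i s =
      some (Function.update (Function.update occ s (some i)) k (some c)) := by
  have hfree : firstFree (Function.update occ s (some i)) s = some k := by
    refine firstFree_eq_some_iff.mpr ⟨hsk.le, by rwa [Function.update_of_ne hsk.ne'], ?_⟩
    intro l hsl hlk
    rcases hsl.eq_or_lt with rfl | hsl
    · simp
    · rw [Function.update_of_ne hsl.ne']
      exact hl l hsl hlk
  simp [mvpStep, hs, hfree]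

end MVPStep

section Transient

variable {p π : Fin n → Fin n} {c d : Fin n} {t y : ℕ}

theorem mvpStep_transientOcc_advance {s : Fin n} (hsy : (s : ℕ) + 1 < y) (hs : (s : ℕ) + 1 < n) :
    mvpStep (transientOcc π s c d y) (π s) s = some (transientOcc π (s + 1) c d y) := by
  rw [mvpStep_of_eq_some (c := c) (k := ⟨s + 1, hs⟩)]
  · congr 1
    funext k
    simp only [transientOcc, Function.update_apply, Fin.ext_iff]
    grind
  all_goals simp only [transientOcc, Fin.lt_def]; grind

theorem mvpStep_transientOcc_leapfrog {s : Fin n} (hs : (s : ℕ) + 2 < n) :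
    mvpStep (transientOcc π s c d (s + 1)) (π s) s =
      some (transientOcc π (s + 1) d c (s + 2)) := by
  rw [mvpStep_of_eq_some (c := c) (k := ⟨s + 2, hs⟩)]
  · congr 1
    funext k
    simp only [transientOcc, Function.update_apply, Fin.ext_iff]
    grind
  all_goals simp only [transientOcc, Fin.lt_def]; grind

theorem runPrefix_add_three
    {step : (Fin n → Option (Fin n)) → Fin n → Fin n → Option (Fin n → Option (Fin n))}
    {s : Fin n} (hπ : (π s : ℕ) = s + 2) (hp : p (π s) = s) :
    runPrefix step p (s + 3) = (runPrefix step p (s + 2)).bind fun occ => step occ (π s) s := by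
  simpa only [hπ, hp] using runPrefix_succ (step := step) (p := p) (π s)

theorem runPrefix_transientOcc_advance
    (hπ : ∀ s : Fin n, (s : ℕ) + 2 < n → (π s : ℕ) = s + 2)
    (hp : ∀ s : Fin n, (s : ℕ) + 2 < n → p (π s) = s)
    (h : runPrefix mvpStep p (t + 2) = some (transientOcc π t c d y)) (r : ℕ) (hry : t + r < y)
    (hrn : t + r + 2 ≤ n) :
    runPrefix mvpStep p (t + r + 2) = some (transientOcc π (t + r) c d y) := by
  induction r with
  | zero => exact h
  | succ r ih =>
    have hlt : t + r < n := by omega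
    have hstep := runPrefix_add_three (step := mvpStep) (hπ ⟨t + r, hlt⟩ (by grind))
      (hp ⟨t + r, hlt⟩ (by grind))
    rw [ih (by omega) (by omega)] at hstep
    exact hstep.trans (mvpStep_transientOcc_advance (s := ⟨t + r, hlt⟩) hry (by grind))

theorem runPrefix_transientOcc_leapfrog
    (hπ : ∀ s : Fin n, (s : ℕ) + 2 < n → (π s : ℕ) = s + 2)
    (hp : ∀ s : Fin n, (s : ℕ) + 2 < n → p (π s) = s)
    (h : runPrefix mvpStep p (t + 2) = some (transientOcc π t c d (t + 1))) (r : ℕ)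
    (hrn : t + r + 2 ≤ n) :
    runPrefix mvpStep p (t + r + 2) = some (transientOcc π (t + r)
      (if Even r then c else d) (if Even r then d else c) (t + r + 1)) := by
  induction r with
  | zero => simpa using h
  | succ r ih =>
    have hlt : t + r < n := by omega
    have hstep := runPrefix_add_three (step := mvpStep) (hπ ⟨t + r, hlt⟩ (by grind))
      (hp ⟨t + r, hlt⟩ (by grind))
    rw [ih (by omega)] at hstep
    refine hstep.trans ((mvpStep_transientOcc_leapfrog (s := ⟨t + r, hlt⟩) (by grind)).trans ?_)
    simp only [Nat.even_add_one, ite_not]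
    rfl

end Transient

theorem runPrefix_two {m : ℕ} {p : Fin (m + 2) → Fin (m + 2)} (π : Fin (m + 2) → Fin (m + 2))
    (h₀ : p 0 = 0) (h₁ : p 1 ≠ 0) :
    runPrefix mvpStep p 2 = some (transientOcc π 0 0 1 (p 1)) := by
  have hfirst : runPrefix mvpStep p 1 = some (Function.update (fun _ => none) 0 (some 0)) := by
    simpa [runPrefix_zero, h₀, mvpStep_of_eq_none] using
      runPrefix_succ (step := mvpStep) (p := p) 0
  have hsecond : runPrefix mvpStep p 2 =
      (runPrefix mvpStep p 1).bind fun occ => mvpStep occ 1 (p 1) := by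
    simpa using runPrefix_succ (step := mvpStep) (p := p) 1
  rw [hsecond, hfirst, Option.bind_some, mvpStep_of_eq_none (by simp [h₁])]
  congr 1
  funext k
  simp only [transientOcc, Function.update_apply, Fin.ext_iff, Fin.val_zero] at h₁ ⊢
  grind

theorem forall_transientOcc_eq_some_iff {m : ℕ} {π : Fin (m + 2) → Fin (m + 2)}
    {c d : Fin (m + 2)} :
    (∀ i, transientOcc π m c d (m + 1) i = some (π i)) ↔
      c = π (Fin.last m).castSucc ∧ d = π (Fin.last (m + 1)) := by
  simp [Fin.forall_fin_succ', transientOcc]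

theorem mvpOutcome_iff_even_sub {m b : ℕ} (hb : b ≤ m) {p : Fin (m + 2) → Fin (m + 2)}
    {π : Equiv.Perm (Fin (m + 2))} (hπ : ∀ s : Fin (m + 2), (s : ℕ) < m → (π s : ℕ) = s + 2)
    (hπm : π (Fin.last m).castSucc = 0) (hπm' : π (Fin.last (m + 1)) = 1) (h₀ : p 0 = 0)
    (h₁ : (p 1 : ℕ) = b + 1) (hp : ∀ s : Fin (m + 2), (s : ℕ) < m → p (π s) = s) :
    MVPOutcome p π ↔ Even (m - b) := by
  replace hπ (s : Fin (m + 2)) (hs : (s : ℕ) + 2 < m + 2) := hπ s (by omega)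
  replace hp (s : Fin (m + 2)) (hs : (s : ℕ) + 2 < m + 2) := hp s (by omega)
  have hstart : runPrefix mvpStep p (0 + 2) = some (transientOcc π 0 0 1 (b + 1)) :=
    h₁ ▸ runPrefix_two π h₀ (by simp [Fin.ext_iff, h₁])
  have hadvance := runPrefix_transientOcc_advance hπ hp hstart b (by omega) (by omega)
  rw [Nat.zero_add] at hadvance
  have hend := runPrefix_transientOcc_leapfrog hπ hp hadvance (m - b) (by omega)
  rw [Nat.add_sub_cancel' hb, runPrefix_self] at hend
  simp only [MVPOutcome, mvpRun, hend, Option.some.injEq, exists_eq_left',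
    forall_transientOcc_eq_some_iff, hπm, hπm']
  split_ifs with h <;> simp [h]

section SubToPF

variable {π : Equiv.Perm (Fin n)} {S : Finset (Fin n × Fin n)} {i j : Fin n}

theorem subToPF_apply_of_mem (h : (j, i) ∈ S) (hunique : ∀ j', (j', i) ∈ S → j' = j) :
    subToPF π S (π i) = j := by
  have hex : ∃ j, (j, π.symm (π i)) ∈ S := ⟨j, by simpa using h⟩
  rw [subToPF, dif_pos hex]
  exact hunique _ (by simpa using hex.choose_spec)

theorem subToPF_apply_of_notMem (h : ∀ j, (j, i) ∉ S) : subToPF π S (π i) = i := by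
  simp [subToPF, h]

end SubToPF

/-- for `2 ≤ j ≤ m` (1-indexed), the 1-subgraph of the inversion
graph of `τ_{m,2}` with the two non-crossing edges `(1, m+1)` and `(j, m+2)`
(0-indexed: `(0, m)` and `(j-1, m+1)`) is valid iff `m + j` is even. -/
theorem statement14 (m j : ℕ) (hm : 1 ≤ m) (hj1 : 2 ≤ j) (hj2 : j ≤ m)
    (π : Equiv.Perm (Fin (m + 2)))
    (hπ : ∀ i : Fin (m + 2),
      (π i : ℕ) = if (i : ℕ) < m then (i : ℕ) + 2 else (i : ℕ) - m) :
    (IsValid π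
      ({((⟨0, by omega⟩ : Fin (m + 2)), (⟨m, by omega⟩ : Fin (m + 2))),
        ((⟨j - 1, by omega⟩ : Fin (m + 2)), (⟨m + 1, by omega⟩ : Fin (m + 2)))} :
        Finset (Fin (m + 2) × Fin (m + 2))) ↔ Even (m + j)) := by
  have hπm : π ⟨m, by omega⟩ = 0 := Fin.ext (by simp [hπ])
  have hπm' : π ⟨m + 1, by omega⟩ = 1 := Fin.ext (by simp [hπ])
  obtain ⟨b, rfl⟩ := Nat.exists_eq_add_of_le' hj1
  rw [IsValid, mvpOutcome_iff_even_sub (b := b) (by omega) _ hπm hπm']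
  · grind
  · exact (congrArg _ hπm.symm).trans (subToPF_apply_of_mem (by simp) (by simp))
  · rw [← hπm', subToPF_apply_of_mem (j := ⟨b + 1, by omega⟩) (by simp) (by simp)]
  · intro s hs
    refine subToPF_apply_of_notMem fun j => ?_
    simp only [mem_insert, mem_singleton, Prod.mk.injEq, Fin.ext_iff]
    omega
  · intro s hs
    rw [hπ, if_pos hs]

end MVPPaper
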